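/- Let Z = {P₁,…,P_s} be a finite set of distinct points of X = ℙ¹×ℙ¹ with radical ideal I, and suppose α⁺(I^{(m+1)}) = α⁺(I^{(m)}) + 2 for some m ≥ 1. Let F be a nonzero form of bidegree (p,q) belonging to I^{(m+1)} with p + q = α⁺(I^{(m+1)}). Then every irreducible factor of F is a form of bidegree (1,0), (0,1) or (1,1); moreover F has at most two distinct irreducible factors of bidegree (1,0) and at most two distinct irreducible factors of bidegree (0,1). -/

import Mathlib

open MvPolynomial

noncomputable section

/-- The bi-graded polynomial ring `ℂ[x₀,x₁,y₀,y₁]`: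
the first `Fin 2` summand indexes the variables `x₀,x₁`,
the second the variables `y₀,y₁`. -/
abbrev R4 : Type := MvPolynomial (Fin 2 ⊕ Fin 2) ℂ

/-- The weight function giving the bi-grading of `R4`. -/
def biWeight : Fin 2 ⊕ Fin 2 → ℕ × ℕ := Sum.elim (fun _ => (1, 0)) (fun _ => (0, 1))

/-- `F` is a (possibly zero) form of bidegree `(p,q)`, i.e. homogeneous of degree `p`
in `x₀,x₁` and homogeneous of degree `q` in `y₀,y₁`. -/
def IsBiForm (F : R4) (p q : ℕ) : Prop :=
  IsWeightedHomogeneous biWeight F (p, q)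

/-- The projective line `ℙ¹` over `ℂ`. -/
abbrev ProjLine := Projectivization ℂ (Fin 2 → ℂ)

/-- The bi-homogeneous prime ideal of a point `P = ([a:b],[c:d])` of `X = ℙ¹ × ℙ¹`,
generated by `b·x₀ - a·x₁` and `d·y₀ - c·y₁`. -/
def pointIdeal (P : ProjLine × ProjLine) : Ideal R4 :=
  Ideal.span
    { C (P.1.rep 1) * X (Sum.inl 0) - C (P.1.rep 0) * X (Sum.inl 1),
      C (P.2.rep 1) * X (Sum.inr 0) - C (P.2.rep 0) * X (Sum.inr 1) }

/-- The `m`-th symbolic power of the radical ideal of the finite set of points `Z ⊂ X`: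
`I^{(m)} = ⋂_{P ∈ Z} I(P)^m`.  For `m = 1` this is the radical ideal `I = I(Z)` itself. -/
def symbPow (Z : Finset (ProjLine × ProjLine)) (m : ℕ) : Ideal R4 :=
  ⨅ P ∈ Z, pointIdeal P ^ m

/-- `α*(J)`: the least `t ≥ 0` such that `J` contains a nonzero form of bidegree `(t,t)`. -/
def alphaStar (J : Ideal R4) : ℕ :=
  sInf {t : ℕ | ∃ F ∈ J, F ≠ 0 ∧ IsBiForm F t t}

/-- `α⁺(J)`: the least `d ≥ 0` such that `J` contains a nonzero form of bidegree `(p,q)`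
with `p + q = d`. -/
def alphaPlus (J : Ideal R4) : ℕ :=
  sInf {d : ℕ | ∃ p q : ℕ, p + q = d ∧ ∃ F ∈ J, F ≠ 0 ∧ IsBiForm F p q}


/-! ### The weight substitution -/

open Finsupp in
/-- substitution `X_i ↦ X_i T^{w i}` -/
def psi (w : Fin 2 ⊕ Fin 2 → ℕ) : R4 →ₐ[ℂ] Polynomial R4 :=
  aeval (fun i => Polynomial.C (X i) * Polynomial.X ^ w i)

lemma psi_monomial (w : Fin 2 ⊕ Fin 2 → ℕ) (d : Fin 2 ⊕ Fin 2 →₀ ℕ) (c : ℂ) :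
    psi w (monomial d c) = Polynomial.monomial (Finsupp.weight w d) (monomial d c) := by
  rw [psi, aeval_monomial, Finsupp.prod]
  simp_rw [mul_pow, Finset.prod_mul_distrib, ← pow_mul, Finset.prod_pow_eq_pow_sum]
  rw [← Polynomial.C_mul_X_pow_eq_monomial, monomial_eq, Finsupp.prod, Finsupp.weight_apply,
    Finsupp.sum]
  simp only [map_mul, map_prod, map_pow, smul_eq_mul, mul_comm (w _)]
  rw [mul_assoc]
  rfl

lemma psi_coeff (w : Fin 2 ⊕ Fin 2 → ℕ) (F : R4) (n : ℕ) :
    (psi w F).coeff n = weightedHomogeneousComponent w n F := by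
  induction F using MvPolynomial.induction_on' with
  | monomial d c =>
    rw [psi_monomial, Polynomial.coeff_monomial]
    ext e
    rw [coeff_weightedHomogeneousComponent, coeff_monomial]
    split_ifs with h1 h2 h3 h4 <;> simp_all [coeff_monomial]
    rintro rfl; exact absurd h1 h2
  | add p q hp hq => simp [hp, hq]

lemma psi_inj (w : Fin 2 ⊕ Fin 2 → ℕ) : Function.Injective (psi w) := by
  rw [injective_iff_map_eq_zero]
  intro F hF
  ext d
  have := congrArg (coeff d) (psi_coeff w F (Finsupp.weight w d))
  rw [coeff_weightedHomogeneousComponent] at this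
  simpa [hF] using this.symm

lemma wh_iff (w : Fin 2 ⊕ Fin 2 → ℕ) (F : R4) (n : ℕ) :
    IsWeightedHomogeneous w F n ↔ psi w F = Polynomial.monomial n F := by
  constructor
  · intro h
    ext1 k
    rw [psi_coeff, Polynomial.coeff_monomial]
    split_ifs with hk
    · subst hk; exact h.weightedHomogeneousComponent_same
    · exact h.weightedHomogeneousComponent_ne k (Ne.symm hk)
  · intro h
    have := psi_coeff w F n
    rw [h, Polynomial.coeff_monomial, if_pos rfl] at this
    rw [this]
    exact weightedHomogeneousComponent_isWeightedHomogeneous n F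

lemma wh_factor (w : Fin 2 ⊕ Fin 2 → ℕ) (G H : R4) (n : ℕ) (h0 : G * H ≠ 0)
    (h : IsWeightedHomogeneous w (G * H) n) :
    ∃ i j, i + j = n ∧ IsWeightedHomogeneous w G i ∧ IsWeightedHomogeneous w H j := by
  rw [wh_iff, map_mul] at h
  have hG : G ≠ 0 := left_ne_zero_of_mul h0
  have hH : H ≠ 0 := right_ne_zero_of_mul h0
  have hG' : psi w G ≠ 0 := fun h => hG (psi_inj w (by simpa using h))
  have hH' : psi w H ≠ 0 := fun h => hH (psi_inj w (by simpa using h))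
  have h1 := congrArg Polynomial.natDegree h
  have h2 := congrArg Polynomial.natTrailingDegree h
  rw [Polynomial.natDegree_mul hG' hH', Polynomial.natDegree_monomial_eq _ h0] at h1
  rw [Polynomial.natTrailingDegree_mul hG' hH', Polynomial.natTrailingDegree_monomial h0] at h2
  have key : ∀ K : R4, K ≠ 0 → (psi w K).natDegree = (psi w K).natTrailingDegree →
      IsWeightedHomogeneous w K (psi w K).natDegree := by
    intro K hK e
    have hm : ∀ k, k ≠ (psi w K).natDegree → (psi w K).coeff k = 0 := by
      intro k hk
      rcases lt_or_gt_of_ne hk with h | h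
      · exact Polynomial.coeff_eq_zero_of_lt_natTrailingDegree (e ▸ h)
      · exact Polynomial.coeff_eq_zero_of_natDegree_lt h
    intro d hd
    by_contra hne
    have := hm _ hne
    rw [psi_coeff] at this
    have := congrArg (coeff d) this
    rw [coeff_weightedHomogeneousComponent] at this
    simp at this
    exact hd this
  have a1 := Polynomial.natTrailingDegree_le_natDegree (psi w G)
  have a2 := Polynomial.natTrailingDegree_le_natDegree (psi w H)
  exact ⟨_, _, h1, key G hG (by omega), key H hH (by omega)⟩

def wx : Fin 2 ⊕ Fin 2 → ℕ := Sum.elim (fun _ => 1) (fun _ => 0)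
def wy : Fin 2 ⊕ Fin 2 → ℕ := Sum.elim (fun _ => 0) (fun _ => 1)
def w0 : Fin 2 ⊕ Fin 2 → ℕ := Sum.elim ![1, 0] ![1, 0]

lemma weight_bi (d : Fin 2 ⊕ Fin 2 →₀ ℕ) :
    Finsupp.weight biWeight d = (d (Sum.inl 0) + d (Sum.inl 1), d (Sum.inr 0) + d (Sum.inr 1)) := by
  rw [Finsupp.weight_apply, Finsupp.sum_fintype _ _ (by simp)]
  simp only [biWeight, Fintype.sum_sum_type, Fin.sum_univ_two, Sum.elim_inl, Sum.elim_inr]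
  ext <;> simp

lemma weight_x (d : Fin 2 ⊕ Fin 2 →₀ ℕ) :
    Finsupp.weight wx d = d (Sum.inl 0) + d (Sum.inl 1) := by
  rw [Finsupp.weight_apply, Finsupp.sum_fintype _ _ (by simp)]
  simp [wx]

lemma weight_y (d : Fin 2 ⊕ Fin 2 →₀ ℕ) :
    Finsupp.weight wy d = d (Sum.inr 0) + d (Sum.inr 1) := by
  rw [Finsupp.weight_apply, Finsupp.sum_fintype _ _ (by simp)]
  simp [wy]

lemma weight_0 (d : Fin 2 ⊕ Fin 2 →₀ ℕ) :
    Finsupp.weight w0 d = d (Sum.inl 0) + d (Sum.inr 0) := by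
  rw [Finsupp.weight_apply, Finsupp.sum_fintype _ _ (by simp)]
  simp [w0]

lemma biform_iff (F : R4) (p q : ℕ) :
    IsBiForm F p q ↔ IsWeightedHomogeneous wx F p ∧ IsWeightedHomogeneous wy F q := by
  unfold IsBiForm IsWeightedHomogeneous
  simp only [weight_bi, weight_x, weight_y, Prod.mk.injEq]
  exact ⟨fun h => ⟨fun d hd => (h hd).1, fun d hd => (h hd).2⟩,
    fun h d hd => ⟨h.1 hd, h.2 hd⟩⟩

lemma biform_factor (G H : R4) (p q : ℕ) (h0 : G * H ≠ 0) (h : IsBiForm (G * H) p q) :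
    ∃ a b c d, a + c = p ∧ b + d = q ∧ IsBiForm G a b ∧ IsBiForm H c d := by
  rw [biform_iff] at h
  obtain ⟨i, j, e1, h1, h2⟩ := wh_factor _ _ _ _ h0 h.1
  obtain ⟨k, l, e2, h3, h4⟩ := wh_factor _ _ _ _ h0 h.2
  exact ⟨i, k, j, l, e1, e2, (biform_iff _ _ _).2 ⟨h1, h3⟩, (biform_iff _ _ _).2 ⟨h2, h4⟩⟩

lemma biform_mul {G H : R4} {a b c d : ℕ} (hG : IsBiForm G a b) (hH : IsBiForm H c d) :
    IsBiForm (G * H) (a + c) (b + d) := IsWeightedHomogeneous.mul hG hH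

lemma biform_pow {G : R4} {a b : ℕ} (hG : IsBiForm G a b) (n : ℕ) :
    IsBiForm (G ^ n) (n * a) (n * b) := by
  have := IsWeightedHomogeneous.pow hG n
  simpa [IsBiForm] using this

/-! ### The standard point ideal -/

def stdIdeal : Ideal R4 := Ideal.span {X (Sum.inl 0), X (Sum.inr 0)}

lemma mem_std_pow_iff (F : R4) (n : ℕ) :
    F ∈ stdIdeal ^ n ↔ (Polynomial.X : Polynomial R4) ^ n ∣ psi w0 F := by
  constructor
  · intro h
    have h1 : stdIdeal ≤ (Ideal.span {(Polynomial.X : Polynomial R4)}).comap (psi w0) := by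
      rw [stdIdeal, Ideal.span_le]
      rintro x (rfl | rfl) <;>
      · rw [SetLike.mem_coe, Ideal.mem_comap, Ideal.mem_span_singleton]
        simp [psi, w0]
    have h2 : F ∈ ((Ideal.span {(Polynomial.X : Polynomial R4)}).comap (psi w0)) ^ n :=
      Ideal.pow_right_mono h1 n h
    have h3 := Ideal.le_comap_pow (psi w0) (K := Ideal.span {(Polynomial.X : Polynomial R4)}) n h2
    rwa [Ideal.mem_comap, Ideal.span_singleton_pow, Ideal.mem_span_singleton] at h3
  · intro h
    rw [Polynomial.X_pow_dvd_iff] at h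
    rw [F.as_sum]
    refine Ideal.sum_mem _ fun d hd => ?_
    have hn : n ≤ d (Sum.inl 0) + d (Sum.inr 0) := by
      by_contra hlt
      have := h (Finsupp.weight w0 d) (by rw [weight_0]; omega)
      rw [psi_coeff] at this
      have := congrArg (coeff d) this
      rw [coeff_weightedHomogeneousComponent] at this
      simp at this
      exact (mem_support_iff.1 hd) this
    have hx : (X (Sum.inl 0) : R4) ∈ stdIdeal := Ideal.subset_span (by simp)
    have hy : (X (Sum.inr 0) : R4) ∈ stdIdeal := Ideal.subset_span (by simp)
    rw [monomial_eq, Finsupp.prod_fintype _ _ (by simp)]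
    refine Ideal.mul_mem_left _ _ ?_
    simp only [Fintype.prod_sum_type, Fin.prod_univ_two]
    have := Ideal.mul_mem_mul (Ideal.pow_mem_pow hx (d (Sum.inl 0)))
      (Ideal.pow_mem_pow hy (d (Sum.inr 0)))
    rw [← pow_add] at this
    have h2 := Ideal.pow_le_pow_right hn this
    have h3 := Ideal.mul_mem_left _ (X (Sum.inl 1) ^ d (Sum.inl 1) * X (Sum.inr 1) ^ d (Sum.inr 1)) h2
    convert h3 using 1
    ring

lemma mem_std_pow_iff_coeff (F : R4) (n : ℕ) :
    F ∈ stdIdeal ^ n ↔ ∀ d, d (Sum.inl 0) + d (Sum.inr 0) < n → coeff d F = 0 := by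
  rw [mem_std_pow_iff, Polynomial.X_pow_dvd_iff]
  simp only [psi_coeff]
  constructor
  · intro h d hd
    have := congrArg (coeff d) (h _ hd)
    rw [coeff_weightedHomogeneousComponent, weight_0] at this
    simpa using this
  · intro h k hk
    ext d
    rw [coeff_weightedHomogeneousComponent, weight_0]
    split_ifs with e
    · simpa using h d (by omega)
    · simp

lemma std_cancel (F H : R4) (a n : ℕ) (h1 : F ∉ stdIdeal ^ (a + 1))
    (h : F * H ∈ stdIdeal ^ (a + n)) : H ∈ stdIdeal ^ n := by
  rw [mem_std_pow_iff] at *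
  rw [map_mul] at h
  induction n generalizing a with
  | zero => simp
  | succ n ih =>
    -- order of F is some e ≤ a
    have hF0 : psi w0 F ≠ 0 := fun h => h1 (by rw [h]; exact dvd_zero _)
    obtain ⟨f, hef, hf⟩ :=
      (Polynomial.finiteMultiplicity_X_sub_C (0 : R4) hF0).exists_eq_pow_mul_and_not_dvd
    simp only [map_zero, sub_zero] at hf hef
    set e := multiplicity (Polynomial.X : Polynomial R4) (psi w0 F)
    have he : e ≤ a := by
      by_contra hlt
      exact h1 (by rw [hef]; exact Dvd.dvd.mul_right (pow_dvd_pow _ (by omega)) _)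
    have h2 : (Polynomial.X : Polynomial R4) ^ e * Polynomial.X ^ (n+1) ∣
        Polynomial.X ^ e * (f * psi w0 H) := by
      rw [← pow_add, ← mul_assoc, ← hef]
      exact (pow_dvd_pow _ (by omega)).trans h
    have h3 := (mul_dvd_mul_iff_left (pow_ne_zero e Polynomial.X_ne_zero)).1 h2
    exact Polynomial.prime_X.pow_dvd_of_dvd_mul_left _ hf h3

/-! ### Coordinates adapted to a point -/

lemma subst_biform (φ : R4 →ₐ[ℂ] R4)
    (h : ∀ i, IsWeightedHomogeneous biWeight (φ (X i)) (biWeight i)) (F : R4) (p q : ℕ)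
    (hF : IsBiForm F p q) : IsBiForm (φ F) p q := by
  unfold IsBiForm at *
  rw [F.as_sum, map_sum]
  refine IsWeightedHomogeneous.sum _ _ _ fun d hd => ?_
  rw [monomial_eq, map_mul, ← algebraMap_eq, AlgHom.commutes, algebraMap_eq, Finsupp.prod, map_prod]
  refine IsWeightedHomogeneous.C_mul ?_ _
  rw [← hF (mem_support_iff.1 hd), Finsupp.weight_apply, Finsupp.sum]
  refine IsWeightedHomogeneous.prod _ _ _ fun i _ => ?_
  rw [map_pow]
  exact (h i).pow _

lemma wh_lin (i j k : Fin 2 ⊕ Fin 2) (hi : biWeight i = biWeight k) (hj : biWeight j = biWeight k)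
    (a b : ℂ) : IsWeightedHomogeneous biWeight (C a * X i + C b * X j : R4) (biWeight k) := by
  refine IsWeightedHomogeneous.add ?_ ?_
  · rw [← hi]; exact (isWeightedHomogeneous_X _ _ _).C_mul _
  · rw [← hj]; exact (isWeightedHomogeneous_X _ _ _).C_mul _

/-- linear substitution -/
def lsub (a b c d a' b' c' d' : ℂ) : R4 →ₐ[ℂ] R4 :=
  aeval (Sum.elim ![C a * X (Sum.inl 0) + C b * X (Sum.inl 1),
      C c * X (Sum.inl 0) + C d * X (Sum.inl 1)]
    ![C a' * X (Sum.inr 0) + C b' * X (Sum.inr 1), C c' * X (Sum.inr 0) + C d' * X (Sum.inr 1)])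

lemma lsub_biform (a b c d a' b' c' d' : ℂ) (F : R4) (p q : ℕ) (hF : IsBiForm F p q) :
    IsBiForm (lsub a b c d a' b' c' d' F) p q := by
  refine subst_biform _ (fun i => ?_) F p q hF
  have hl : ∀ i j : Fin 2, biWeight (Sum.inl i) = biWeight (Sum.inl j) := fun _ _ => rfl
  have hr : ∀ i j : Fin 2, biWeight (Sum.inr i) = biWeight (Sum.inr j) := fun _ _ => rfl
  have h1 : ∀ f : Fin 2 ⊕ Fin 2 → R4, ∀ i, aeval (R := ℂ) f (X i) = f i := fun f i => aeval_X f i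
  unfold lsub
  rw [h1]
  rcases i with i | i
  · have h2 : ∀ i : Fin 2, i = 0 ∨ i = 1 := by decide
    rcases h2 i with rfl | rfl
    · exact wh_lin (Sum.inl 0) (Sum.inl 1) _ (hl _ _) (hl _ _) a b
    · exact wh_lin (Sum.inl 0) (Sum.inl 1) _ (hl _ _) (hl _ _) c d
  · have h2 : ∀ i : Fin 2, i = 0 ∨ i = 1 := by decide
    rcases h2 i with rfl | rfl
    · exact wh_lin (Sum.inr 0) (Sum.inr 1) _ (hr _ _) (hr _ _) a' b'
    · exact wh_lin (Sum.inr 0) (Sum.inr 1) _ (hr _ _) (hr _ _) c' d'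

lemma rep_dual (x : ProjLine) : ∃ s t : ℂ, s * x.rep 0 + t * x.rep 1 = 1 := by
  have h := x.rep_nonzero
  by_cases h0 : x.rep 0 = 0
  · have h1 : x.rep 1 ≠ 0 := by
      intro h1; apply h; ext i; fin_cases i <;> simpa
    exact ⟨0, (x.rep 1)⁻¹, by simp [h1]⟩
  · exact ⟨(x.rep 0)⁻¹, 0, by simp [h0]⟩

def ev (P : ProjLine × ProjLine) : Fin 2 ⊕ Fin 2 → ℂ := Sum.elim P.1.rep P.2.rep

lemma exists_tau (P : ProjLine × ProjLine) : ∃ τ : R4 ≃ₐ[ℂ] R4,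
    (∀ F n, F ∈ pointIdeal P ^ n ↔ τ F ∈ stdIdeal ^ n) ∧
    (∀ F p q, IsBiForm F p q ↔ IsBiForm (τ F) p q) ∧
    (∀ F, eval (ev P) F = eval (Sum.elim ![0, 1] ![0, 1]) (τ F)) ∧
    τ (C (P.1.rep 1) * X (Sum.inl 0) - C (P.1.rep 0) * X (Sum.inl 1)) = X (Sum.inl 0) ∧
    τ (C (P.2.rep 1) * X (Sum.inr 0) - C (P.2.rep 0) * X (Sum.inr 1)) = X (Sum.inr 0) := by
  obtain ⟨s, t, h1⟩ := rep_dual P.1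
  obtain ⟨s', t', h2⟩ := rep_dual P.2
  set a := P.1.rep 0 with ha
  set b := P.1.rep 1 with hb
  set c := P.2.rep 0 with hc
  set d := P.2.rep 1 with hd
  have h1C : (C s * C a + C t * C b : R4) = 1 := by
    rw [← C_mul, ← C_mul, ← C_add, h1, C_1]
  have h2C : (C s' * C c + C t' * C d : R4) = 1 := by
    rw [← C_mul, ← C_mul, ← C_add, h2, C_1]
  have e1 : (lsub t a (-s) b t' c (-s') d).comp (lsub b (-a) s t d (-c) s' t') = AlgHom.id ℂ R4 := by
    ext1 i
    rcases i with i | i <;> fin_cases i <;>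
      simp [lsub, algHom_C, algebraMap_eq]
    · linear_combination (X (Sum.inl 0)) * h1C
    · linear_combination (X (Sum.inl 1)) * h1C
    · linear_combination (X (Sum.inr 0)) * h2C
    · linear_combination (X (Sum.inr 1)) * h2C
  have e2 : (lsub b (-a) s t d (-c) s' t').comp (lsub t a (-s) b t' c (-s') d) = AlgHom.id ℂ R4 := by
    ext1 i
    rcases i with i | i <;> fin_cases i <;>
      simp [lsub, algHom_C, algebraMap_eq]
    · linear_combination (X (Sum.inl 0)) * h1C
    · linear_combination (X (Sum.inl 1)) * h1C
    · linear_combination (X (Sum.inr 0)) * h2C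
    · linear_combination (X (Sum.inr 1)) * h2C
  let τ : R4 ≃ₐ[ℂ] R4 := AlgEquiv.ofAlgHom _ _ e1 e2
  have t1 : τ (C b * X (Sum.inl 0) - C a * X (Sum.inl 1)) = X (Sum.inl 0) := by
    simp [τ, lsub, algHom_C, algebraMap_eq]
    linear_combination (X (Sum.inl 0)) * h1C
  have t2 : τ (C d * X (Sum.inr 0) - C c * X (Sum.inr 1)) = X (Sum.inr 0) := by
    simp [τ, lsub, algHom_C, algebraMap_eq]
    linear_combination (X (Sum.inr 0)) * h2C
  refine ⟨τ, ?_, ?_, ?_, t1, t2⟩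
  · intro F n
    have hm : (pointIdeal P).map (τ : R4 →+* R4) = stdIdeal := by
      rw [pointIdeal, Ideal.map_span, stdIdeal, Set.image_pair]
      congr 1
      change {τ _, τ _} = _
      rw [t1, t2]
    rw [← hm, ← Ideal.map_pow]
    constructor
    · exact fun h => Ideal.mem_map_of_mem (τ : R4 →+* R4) h
    · intro h
      have := (Ideal.mem_map_iff_of_surjective (τ : R4 →+* R4) τ.surjective).1 h
      obtain ⟨x, hx, e⟩ := this
      have : x = F := τ.injective e
      rwa [← this]
  · intro F p q
    constructor
    · exact lsub_biform _ _ _ _ _ _ _ _ F p q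
    · intro h
      have := lsub_biform b (-a) s t d (-c) s' t' _ p q h
      have h3 := τ.symm_apply_apply F
      change lsub b (-a) s t d (-c) s' t' (τ F) = F at h3
      rwa [h3] at this
  · intro F
    have : (aeval (Sum.elim ![0, 1] ![0, 1]) : R4 →ₐ[ℂ] ℂ).comp (lsub t a (-s) b t' c (-s') d)
        = aeval (ev P) := by
      ext1 i
      rcases i with i | i <;> fin_cases i <;>
      simp [lsub, ev, ha, hb, hc, hd]
    have h4 := congrArg (fun f => f F) this
    simp only [AlgHom.comp_apply] at h4
    rw [← coe_aeval_eq_eval, ← coe_aeval_eq_eval]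
    exact h4.symm

/-! ### Basic facts on point ideals -/

lemma pt_cancel (P : ProjLine × ProjLine) (F H : R4) (a n : ℕ) (h1 : F ∉ pointIdeal P ^ (a + 1))
    (h : F * H ∈ pointIdeal P ^ (a + n)) : H ∈ pointIdeal P ^ n := by
  obtain ⟨τ, h2, -⟩ := exists_tau P
  rw [h2] at *
  rw [map_mul] at h
  exact std_cancel _ _ _ _ h1 h

lemma pt_order (P : ProjLine × ProjLine) (F : R4) (hF : F ≠ 0) :
    ∃ n, F ∈ pointIdeal P ^ n ∧ F ∉ pointIdeal P ^ (n + 1) := by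
  classical
  obtain ⟨τ, h2, -⟩ := exists_tau P
  have hex : ∃ n, F ∉ pointIdeal P ^ n := by
    by_contra hcon
    push Not at hcon
    apply hF
    apply τ.injective
    rw [map_zero]
    ext d
    exact (mem_std_pow_iff_coeff _ _).1 ((h2 _ _).1 (hcon (d (Sum.inl 0) + d (Sum.inr 0) + 1))) d
      (by omega)
  have h0 : Nat.find hex ≠ 0 := by
    intro h
    have := Nat.find_spec hex
    rw [h] at this
    simp at this
  obtain ⟨n, hn⟩ := Nat.exists_eq_succ_of_ne_zero h0
  refine ⟨n, ?_, ?_⟩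
  · by_contra h
    have := Nat.find_min' hex h
    omega
  · have := Nat.find_spec hex
    rwa [hn] at this

def expo (a b c d : ℕ) : Fin 2 ⊕ Fin 2 →₀ ℕ :=
  Finsupp.equivFunOnFinite.symm (Sum.elim ![a, b] ![c, d])

@[simp] lemma expo_l0 (a b c d : ℕ) : expo a b c d (Sum.inl 0) = a := rfl
@[simp] lemma expo_l1 (a b c d : ℕ) : expo a b c d (Sum.inl 1) = b := rfl
@[simp] lemma expo_r0 (a b c d : ℕ) : expo a b c d (Sum.inr 0) = c := rfl
@[simp] lemma expo_r1 (a b c d : ℕ) : expo a b c d (Sum.inr 1) = d := rfl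

lemma eq_expo (d : Fin 2 ⊕ Fin 2 →₀ ℕ) :
    d = expo (d (Sum.inl 0)) (d (Sum.inl 1)) (d (Sum.inr 0)) (d (Sum.inr 1)) := by
  ext i
  rcases i with i | i <;> fin_cases i <;> rfl

lemma biform_expo {F : R4} {p q : ℕ} (hF : IsBiForm F p q) {d : Fin 2 ⊕ Fin 2 →₀ ℕ}
    (hd : coeff d F ≠ 0) : d (Sum.inl 0) ≤ p ∧ d (Sum.inr 0) ≤ q ∧
      d = expo (d (Sum.inl 0)) (p - d (Sum.inl 0)) (d (Sum.inr 0)) (q - d (Sum.inr 0)) := by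
  have := hF hd
  rw [weight_bi, Prod.mk.injEq] at this
  refine ⟨by omega, by omega, ?_⟩
  have h := eq_expo d
  rw [show p - d (Sum.inl 0) = d (Sum.inl 1) by omega,
    show q - d (Sum.inr 0) = d (Sum.inr 1) by omega]
  exact h

lemma eval_std {F : R4} {p q : ℕ} (hF : IsBiForm F p q) :
    eval (Sum.elim ![0, 1] ![0, 1]) F = coeff (expo 0 p 0 q) F := by
  rw [eval_eq']
  rw [Finset.sum_eq_single (expo 0 p 0 q)]
  · simp
  · intro d hd hne
    simp only [Fintype.prod_sum_type, Fin.prod_univ_two, Sum.elim_inl, Sum.elim_inr]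
    by_cases h0 : d (Sum.inl 0) = 0 ∧ d (Sum.inr 0) = 0
    · exfalso
      apply hne
      have := (biform_expo hF (mem_support_iff.1 hd)).2.2
      rwa [h0.1, h0.2] at this
    · by_cases h1 : d (Sum.inl 0) = 0
      · have : d (Sum.inr 0) ≠ 0 := fun h => h0 ⟨h1, h⟩
        simp [this]
      · simp [h1]
  · intro h
    rw [notMem_support_iff.1 h, zero_mul]

lemma mem_pt_iff (P : ProjLine × ProjLine) {F : R4} {p q : ℕ} (hF : IsBiForm F p q) :
    F ∈ pointIdeal P ↔ eval (ev P) F = 0 := by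
  obtain ⟨τ, h1, h2, h3, -⟩ := exists_tau P
  have := h1 F 1
  rw [pow_one] at this
  rw [this, h3, eval_std ((h2 _ _ _).1 hF), mem_std_pow_iff_coeff]
  constructor
  · intro h
    exact h _ (by simp)
  · intro h d hd
    by_contra hne
    have h4 := (biform_expo ((h2 _ _ _).1 hF) hne).2.2
    rw [show d (Sum.inl 0) = 0 by omega, show d (Sum.inr 0) = 0 by omega] at h4
    rw [h4] at hne
    exact hne h

/-! ### Dimension counts -/

open Module

def tri (n : ℕ) : ℕ := ∑ k : Fin n, ((k : ℕ) + 1)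

lemma tri_succ (n : ℕ) : tri (n + 1) = tri n + (n + 1) := by
  simp [tri, Fin.sum_univ_castSucc]

lemma two_tri (n : ℕ) : 2 * tri n = n * (n + 1) := by
  induction n with
  | zero => rfl
  | succ n ih => rw [tri_succ, mul_add, ih]; ring

/-- forms of bidegree `(p,q)` -/
def S (p q : ℕ) : Submodule ℂ R4 := weightedHomogeneousSubmodule ℂ biWeight (p, q)

lemma mem_S {F : R4} {p q : ℕ} : F ∈ S p q ↔ IsBiForm F p q := Iff.rfl

def coeffS (p q : ℕ) : S p q →ₗ[ℂ] (Fin (p + 1) × Fin (q + 1) → ℂ) :=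
  LinearMap.pi fun ij => (lcoeff ℂ (expo ij.1 (p - ij.1) ij.2 (q - ij.2))) ∘ₗ (S p q).subtype

lemma coeffS_bij (p q : ℕ) : Function.Bijective (coeffS p q) := by
  constructor
  · rw [← LinearMap.ker_eq_bot, LinearMap.ker_eq_bot']
    intro F hF
    ext d
    by_contra hne
    have h1 := biform_expo (mem_S.1 F.2) hne
    have h2 := congrFun hF (⟨d (Sum.inl 0), by omega⟩, ⟨d (Sum.inr 0), by omega⟩)
    simp only [coeffS, LinearMap.pi_apply, LinearMap.comp_apply, lcoeff_apply,
      Submodule.subtype_apply, Pi.zero_apply] at h2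
    rw [← h1.2.2] at h2
    exact hne h2
  · intro c
    have hmem : ∑ ij : Fin (p + 1) × Fin (q + 1),
        monomial (expo ij.1 (p - ij.1) ij.2 (q - ij.2)) (c ij) ∈ S p q := by
      refine Submodule.sum_mem _ fun ij _ => ?_
      refine isWeightedHomogeneous_monomial _ _ _ ?_
      rw [weight_bi]
      have := ij.1.2
      have := ij.2.2
      simp only [expo_l0, expo_l1, expo_r0, expo_r1, Prod.mk.injEq]
      omega
    refine ⟨⟨_, hmem⟩, ?_⟩
    ext ij
    simp only [coeffS, LinearMap.pi_apply, LinearMap.comp_apply, lcoeff_apply,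
      Submodule.subtype_apply, coeff_sum, coeff_monomial]
    rw [Finset.sum_eq_single ij]
    · simp
    · intro kl _ hne
      rw [if_neg]
      intro h
      apply hne
      have h1 := congrArg (fun d => d (Sum.inl 0)) h
      have h2 := congrArg (fun d => d (Sum.inr 0)) h
      simp only [expo_l0, expo_r0] at h1 h2
      ext
      · exact h1
      · exact h2
    · simp

instance S_fin (p q : ℕ) : FiniteDimensional ℂ (S p q) :=
  Module.Finite.equiv (LinearEquiv.ofBijective _ (coeffS_bij p q)).symm

lemma finrank_S (p q : ℕ) : finrank ℂ (S p q) = (p + 1) * (q + 1) := by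
  rw [(LinearEquiv.ofBijective _ (coeffS_bij p q)).finrank_eq]
  simp

/-- forms of bidegree `(p,q)` with prescribed multiplicities -/
def V (Z : Finset (ProjLine × ProjLine)) (ν : ProjLine × ProjLine → ℕ) (p q : ℕ) :
    Submodule ℂ R4 :=
  S p q ⊓ ⨅ P ∈ Z, (pointIdeal P ^ ν P).restrictScalars ℂ

lemma mem_V {Z : Finset (ProjLine × ProjLine)} {ν : ProjLine × ProjLine → ℕ} {p q : ℕ} {F : R4} :
    F ∈ V Z ν p q ↔ IsBiForm F p q ∧ ∀ P ∈ Z, F ∈ pointIdeal P ^ ν P := by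
  simp [V, mem_S]

lemma V_le (Z : Finset (ProjLine × ProjLine)) (ν : ProjLine × ProjLine → ℕ) (p q : ℕ) :
    V Z ν p q ≤ S p q := inf_le_left

instance V_fin (Z : Finset (ProjLine × ProjLine)) (ν : ProjLine × ProjLine → ℕ) (p q : ℕ) :
    FiniteDimensional ℂ (V Z ν p q) := Submodule.finiteDimensional_of_le (V_le Z ν p q)

lemma V_empty (ν : ProjLine × ProjLine → ℕ) (p q : ℕ) : V ∅ ν p q = S p q := by
  ext F
  simp [mem_V, mem_S]

lemma V_insert (Z : Finset (ProjLine × ProjLine)) (ν : ProjLine × ProjLine → ℕ) (p q : ℕ)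
    [DecidableEq (ProjLine × ProjLine)] (P : ProjLine × ProjLine) :
    V (insert P Z) ν p q = V Z ν p q ⊓ (pointIdeal P ^ ν P).restrictScalars ℂ := by
  ext F
  simp only [mem_V, Submodule.mem_inf, Finset.forall_mem_insert, Submodule.restrictScalars_mem]
  tauto

lemma cond_le (W : Submodule ℂ R4) (p q : ℕ) (hW : W ≤ S p q) (P : ProjLine × ProjLine) (n : ℕ) :
    finrank ℂ W ≤ finrank ℂ (W ⊓ (pointIdeal P ^ n).restrictScalars ℂ : Submodule ℂ R4) + tri n := by
  obtain ⟨τ, h1, h2, -⟩ := exists_tau P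
  have : FiniteDimensional ℂ W := Submodule.finiteDimensional_of_le hW
  let f : W →ₗ[ℂ] ((Σ k : Fin n, Fin ((k : ℕ) + 1)) → ℂ) := LinearMap.pi fun kj =>
    (lcoeff ℂ (expo kj.2 (p - kj.2) (kj.1 - kj.2) (q - (kj.1 - kj.2)))) ∘ₗ
      (τ.toLinearMap ∘ₗ W.subtype)
  have hr := LinearMap.finrank_range_add_finrank_ker f
  have hr1 : finrank ℂ (LinearMap.range f) ≤ tri n := by
    refine (Submodule.finrank_le _).trans ?_
    rw [finrank_fintype_fun_eq_card, Fintype.card_sigma]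
    simp [tri]
  have hk : (LinearMap.ker f).map W.subtype ≤ W ⊓ (pointIdeal P ^ n).restrictScalars ℂ := by
    rintro _ ⟨F, hF, rfl⟩
    refine ⟨F.2, ?_⟩
    change (F : R4) ∈ pointIdeal P ^ n
    rw [h1, mem_std_pow_iff_coeff]
    intro d hd
    by_contra hne
    have h3 := biform_expo ((h2 _ _ _).1 (mem_S.1 (hW F.2))) hne
    have h4 := congrFun (LinearMap.mem_ker.1 hF)
      ⟨⟨d (Sum.inl 0) + d (Sum.inr 0), hd⟩, ⟨d (Sum.inl 0), by simp⟩⟩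
    simp only [f, LinearMap.pi_apply, LinearMap.comp_apply, lcoeff_apply,
      Submodule.subtype_apply, Pi.zero_apply, AlgEquiv.toLinearMap_apply,
      Nat.add_sub_cancel_left] at h4
    rw [← h3.2.2] at h4
    exact hne h4
  have hk2 := Submodule.finrank_mono hk
  rw [Submodule.finrank_map_subtype_eq] at hk2
  omega

lemma V_ge (Z : Finset (ProjLine × ProjLine)) (ν : ProjLine × ProjLine → ℕ) (p q : ℕ) :
    (p + 1) * (q + 1) ≤ finrank ℂ (V Z ν p q) + ∑ P ∈ Z, tri (ν P) := by
  classical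
  induction Z using Finset.induction_on with
  | empty => rw [V_empty, finrank_S]; simp
  | insert P Z hP ih =>
    rw [V_insert, Finset.sum_insert hP]
    have := cond_le (V Z ν p q) p q (V_le _ _ _ _) P (ν P)
    omega

lemma proj_eq (x y : ProjLine) (h : x.rep 1 * y.rep 0 - x.rep 0 * y.rep 1 = 0) : x = y := by
  obtain ⟨s, t, h1⟩ := rep_dual x
  rw [← x.mk_rep, ← y.mk_rep, eq_comm, Projectivization.mk_eq_mk_iff']
  refine ⟨s * y.rep 0 + t * y.rep 1, ?_⟩
  have h2 : ∀ i : Fin 2, i = 0 ∨ i = 1 := by decide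
  ext i
  rcases h2 i with rfl | rfl
  · simp only [Pi.smul_apply, smul_eq_mul]
    linear_combination y.rep 0 * h1 - t * h
  · simp only [Pi.smul_apply, smul_eq_mul]
    linear_combination y.rep 1 * h1 + s * h

lemma biform_l (a b : ℂ) : IsBiForm (C a * X (Sum.inl 0) - C b * X (Sum.inl 1)) 1 0 := by
  have := wh_lin (Sum.inl 0) (Sum.inl 1) (Sum.inl 0) rfl rfl a (-b)
  rw [C_neg, neg_mul, ← sub_eq_add_neg] at this
  exact this

lemma biform_r (a b : ℂ) : IsBiForm (C a * X (Sum.inr 0) - C b * X (Sum.inr 1)) 0 1 := by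
  have := wh_lin (Sum.inr 0) (Sum.inr 1) (Sum.inr 0) rfl rfl a (-b)
  rw [C_neg, neg_mul, ← sub_eq_add_neg] at this
  exact this

lemma sep_one (P Q : ProjLine × ProjLine) (h : Q ≠ P) : ∃ (E : R4) (e f : ℕ),
    IsBiForm E e f ∧ E ∈ pointIdeal Q ∧ eval (ev P) E ≠ 0 := by
  by_cases h1 : Q.1 = P.1
  · have h2 : Q.2 ≠ P.2 := fun h2 => h (Prod.ext h1 h2)
    refine ⟨_, _, _, biform_r (Q.2.rep 1) (Q.2.rep 0), Ideal.subset_span (by simp), ?_⟩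
    intro h3
    apply h2
    apply proj_eq
    simpa [ev] using h3
  · refine ⟨_, _, _, biform_l (Q.1.rep 1) (Q.1.rep 0), Ideal.subset_span (by simp), ?_⟩
    intro h3
    apply h1
    apply proj_eq
    simpa [ev] using h3

lemma sep (Z : Finset (ProjLine × ProjLine)) (ν : ProjLine × ProjLine → ℕ)
    (P : ProjLine × ProjLine) (hP : P ∉ Z) : ∃ r, ∀ u v, r ≤ u → r ≤ v →
    ∃ B, IsBiForm B u v ∧ eval (ev P) B ≠ 0 ∧ ∀ Q ∈ Z, B ∈ pointIdeal Q ^ ν Q := by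
  classical
  induction Z using Finset.induction_on with
  | empty =>
    refine ⟨0, fun u v _ _ => ?_⟩
    obtain ⟨τ, h1, h2, h3, -⟩ := exists_tau P
    have hB : IsBiForm (monomial (expo 0 u 0 v) (1 : ℂ)) u v := by
      refine isWeightedHomogeneous_monomial _ _ _ ?_
      rw [weight_bi]
      simp
    refine ⟨τ.symm (monomial (expo 0 u 0 v) 1), ?_, ?_, by simp⟩
    · rw [h2, τ.apply_symm_apply]
      exact hB
    · rw [h3, τ.apply_symm_apply, eval_std hB, coeff_monomial]
      simp
  | insert Q Z hQ ih =>
    rw [Finset.mem_insert, not_or] at hP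
    obtain ⟨r, hr⟩ := ih hP.2
    obtain ⟨E, e, f, hE, hEQ, hEP⟩ := sep_one P Q (Ne.symm hP.1)
    refine ⟨r + ν Q * e + ν Q * f, fun u v hu hv => ?_⟩
    obtain ⟨B, hB1, hB2, hB3⟩ := hr (u - ν Q * e) (v - ν Q * f) (by omega) (by omega)
    refine ⟨B * E ^ ν Q, ?_, ?_, ?_⟩
    · have := biform_mul hB1 (biform_pow hE (ν Q))
      rwa [Nat.sub_add_cancel (by omega), Nat.sub_add_cancel (by omega)] at this
    · rw [map_mul, map_pow]
      exact mul_ne_zero hB2 (pow_ne_zero _ hEP)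
    · intro Q' hQ'
      rcases Finset.mem_insert.1 hQ' with rfl | h
      · exact Ideal.mul_mem_left _ _ (Ideal.pow_mem_pow hEQ _)
      · exact Ideal.mul_mem_right _ _ (hB3 _ h)

lemma finrank_step (A D : Submodule ℂ R4) [FiniteDimensional ℂ D] (hAD : A ≤ D) (n : ℕ)
    (f : (Fin n → ℂ) →ₗ[ℂ] R4) (h1 : ∀ c, f c ∈ D) (h2 : ∀ c, f c ∈ A → c = 0) :
    finrank ℂ A + n ≤ finrank ℂ D := by
  have : FiniteDimensional ℂ A := Submodule.finiteDimensional_of_le hAD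
  have hinj : Function.Injective f := by
    rw [← LinearMap.ker_eq_bot, LinearMap.ker_eq_bot']
    intro c hc
    exact h2 c (by rw [hc]; exact A.zero_mem)
  have hfr := LinearMap.finrank_range_of_inj hinj
  have hs := Submodule.finrank_sup_add_finrank_inf_eq A (LinearMap.range f)
  have hi : A ⊓ LinearMap.range f = ⊥ := by
    rw [eq_bot_iff]
    rintro _ ⟨hx, c, rfl⟩
    rw [h2 c hx]
    simp
  have hle : A ⊔ LinearMap.range f ≤ D := by
    refine sup_le hAD ?_
    rintro _ ⟨c, rfl⟩
    exact h1 c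
  have := Submodule.finrank_mono hle
  rw [hi, finrank_bot] at hs
  simp at hfr
  omega

lemma local_step (P : ProjLine × ProjLine) (n : ℕ) : ∃ f : (Fin (n + 1) → ℂ) →ₗ[ℂ] R4,
    (∀ c, IsBiForm (f c) n n) ∧ (∀ c, f c ∈ pointIdeal P ^ n) ∧
    ∀ c, f c ∈ pointIdeal P ^ (n + 1) → c = 0 := by
  obtain ⟨τ, h1, h2, -⟩ := exists_tau P
  let g : (Fin (n + 1) → ℂ) →ₗ[ℂ] R4 :=
    ∑ i : Fin (n + 1), (monomial (expo i (n - i) (n - i) i)) ∘ₗ LinearMap.proj i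
  have hg : ∀ c, g c = ∑ i : Fin (n + 1), monomial (expo i (n - i) (n - i) i) (c i) := by
    intro c
    simp [g, LinearMap.sum_apply]
  refine ⟨τ.symm.toLinearMap ∘ₗ g, ?_, ?_, ?_⟩
  · intro c
    rw [h2]
    simp only [LinearMap.comp_apply, AlgEquiv.toLinearMap_apply, τ.apply_symm_apply, hg]
    refine IsWeightedHomogeneous.sum _ _ _ fun i _ => ?_
    refine isWeightedHomogeneous_monomial _ _ _ ?_
    rw [weight_bi]
    have := i.2
    simp only [expo_l0, expo_l1, expo_r0, expo_r1, Prod.mk.injEq]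
    omega
  · intro c
    rw [h1]
    simp only [LinearMap.comp_apply, AlgEquiv.toLinearMap_apply, τ.apply_symm_apply, hg]
    refine Ideal.sum_mem _ fun i _ => ?_
    rw [mem_std_pow_iff_coeff]
    intro d hd
    rw [coeff_monomial, if_neg]
    rintro rfl
    have := i.2
    simp only [expo_l0, expo_r0] at hd
    omega
  · intro c hc
    rw [h1] at hc
    simp only [LinearMap.comp_apply, AlgEquiv.toLinearMap_apply, τ.apply_symm_apply, hg] at hc
    rw [mem_std_pow_iff_coeff] at hc
    ext i
    have := i.2
    have h3 := hc (expo i (n - i) (n - i) i) (by simp only [expo_l0, expo_r0]; omega)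
    rw [coeff_sum, Finset.sum_eq_single i] at h3
    · simpa using h3
    · intro k _ hne
      rw [coeff_monomial, if_neg]
      intro h
      apply hne
      have h1 := congrArg (fun d => d (Sum.inl 0)) h
      simp only [expo_l0] at h1
      ext
      exact h1
    · simp

lemma V_large (Z : Finset (ProjLine × ProjLine)) (ν : ProjLine × ProjLine → ℕ) :
    ∃ r, ∀ u v, r ≤ u → r ≤ v →
      finrank ℂ (V Z ν u v) + ∑ P ∈ Z, tri (ν P) ≤ (u + 1) * (v + 1) := by
  classical
  induction Z using Finset.induction_on with
  | empty =>
    refine ⟨0, fun u v _ _ => ?_⟩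
    rw [V_empty, finrank_S]; simp
  | insert P Z hP ih =>
    obtain ⟨r, hr⟩ := ih
    obtain ⟨r', hr'⟩ := sep Z ν P hP
    refine ⟨r + r' + ν P, fun u v hu hv => ?_⟩
    have h1 := hr u v (by omega) (by omega)
    rw [V_insert, Finset.sum_insert hP]
    have key : ∀ n, n ≤ ν P → finrank ℂ (V Z ν u v ⊓ (pointIdeal P ^ n).restrictScalars ℂ :
        Submodule ℂ R4) + tri n ≤ finrank ℂ (V Z ν u v) := by
      intro n
      induction n with
      | zero =>
        intro _
        simp only [tri, Finset.univ_eq_empty, Finset.sum_empty, add_zero]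
        exact Submodule.finrank_mono inf_le_left
      | succ n ih =>
        intro hn
        have h2 := ih (by omega)
        obtain ⟨B, hB1, hB2, hB3⟩ := hr' (u - n) (v - n) (by omega) (by omega)
        obtain ⟨f, hf1, hf2, hf3⟩ := local_step P n
        have : FiniteDimensional ℂ (V Z ν u v ⊓ (pointIdeal P ^ n).restrictScalars ℂ :
            Submodule ℂ R4) := Submodule.finiteDimensional_of_le inf_le_left
        have h3 := finrank_step (V Z ν u v ⊓ (pointIdeal P ^ (n + 1)).restrictScalars ℂ)
          (V Z ν u v ⊓ (pointIdeal P ^ n).restrictScalars ℂ)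
          (inf_le_inf_left _ (fun x hx => Ideal.pow_le_pow_right (Nat.le_succ n) hx)) (n + 1)
          ((LinearMap.mulLeft ℂ B) ∘ₗ f) ?_ ?_
        · rw [tri_succ]
          omega
        · intro c
          simp only [LinearMap.comp_apply, LinearMap.mulLeft_apply]
          refine ⟨mem_V.2 ⟨?_, fun Q hQ => Ideal.mul_mem_right _ _ (hB3 Q hQ)⟩,
            Ideal.mul_mem_left _ _ (hf2 c)⟩
          have := biform_mul hB1 (hf1 c)
          rwa [Nat.sub_add_cancel (by omega), Nat.sub_add_cancel (by omega)] at this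
        · intro c hc
          simp only [LinearMap.comp_apply, LinearMap.mulLeft_apply] at hc
          apply hf3
          have h4 : B * f c ∈ pointIdeal P ^ (n + 1) := hc.2
          refine pt_cancel P B (f c) 0 (n + 1) ?_ (by simpa using h4)
          rw [zero_add, pow_one, mem_pt_iff P hB1]
          exact hB2
    have := key (ν P) le_rfl
    omega

/-! ### A Bezout inequality -/

lemma biform_inj {G : R4} {a b c d : ℕ} (h0 : G ≠ 0) (h1 : IsBiForm G a b) (h2 : IsBiForm G c d) :
    a = c ∧ b = d := by
  have := IsWeightedHomogeneous.inj_right h0 h1 h2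
  simpa using this

lemma biform_quot {G K : R4} {a b r s : ℕ} (h0 : G ≠ 0) (h1 : IsBiForm G a b)
    (h2 : IsBiForm (G * K) (a + r) (b + s)) : IsBiForm K r s := by
  by_cases hK : K = 0
  · rw [hK]; exact isWeightedHomogeneous_zero _ _ _
  · obtain ⟨a', b', c, d, e1, e2, h3, h4⟩ := biform_factor _ _ _ _ (mul_ne_zero h0 hK) h2
    obtain ⟨rfl, rfl⟩ := biform_inj h0 h1 h3
    have : c = r := by omega
    have : d = s := by omega
    subst_vars
    exact h4

def mulS (G : R4) (W : Submodule ℂ R4) : Submodule ℂ R4 := W.map (LinearMap.mulLeft ℂ G)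

lemma finrank_mulS (G : R4) (h0 : G ≠ 0) (W : Submodule ℂ R4) :
    finrank ℂ (mulS G W) = finrank ℂ W :=
  (Submodule.equivMapOfInjective (LinearMap.mulLeft ℂ G) (fun _ _ h => mul_left_cancel₀ h0 h)
    W).finrank_eq.symm

lemma mem_mulS {G x : R4} {W : Submodule ℂ R4} : x ∈ mulS G W ↔ ∃ A ∈ W, G * A = x := by
  simp [mulS]

instance mulS_fin (G : R4) (W : Submodule ℂ R4) [FiniteDimensional ℂ W] :
    FiniteDimensional ℂ (mulS G W) := by unfold mulS; infer_instance

lemma sup_step (M N N1 : Submodule ℂ R4) [FiniteDimensional ℂ M] [FiniteDimensional ℂ N] (t : ℕ)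
    (h1 : N1 ≤ M) (h2 : N1 ≤ N) (h3 : finrank ℂ M ≤ finrank ℂ N1 + t) :
    finrank ℂ (M ⊔ N : Submodule ℂ R4) ≤ finrank ℂ N + t := by
  have h4 := Submodule.finrank_sup_add_finrank_inf_eq M N
  have h5 := Submodule.finrank_mono (le_inf h1 h2)
  omega

lemma tri_one : tri 1 = 1 := by
  have := two_tri 1
  omega

lemma tri_add (m n : ℕ) : tri (m + n) = tri m + tri n + m * n := by
  have h1 := two_tri (m + n)
  have h2 := two_tri m
  have h3 := two_tri n
  nlinarith

lemma bezout (Z : Finset (ProjLine × ProjLine)) (μ κ : ProjLine × ProjLine → ℕ) (G H : R4)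
    (a b c d : ℕ) (hG : IsBiForm G a b) (hH : IsBiForm H c d) (hirr : Irreducible G)
    (hdvd : ¬ G ∣ H) (hGμ : ∀ P ∈ Z, G ∈ pointIdeal P ^ μ P)
    (hHκ : ∀ P ∈ Z, H ∈ pointIdeal P ^ κ P) :
    ∑ P ∈ Z, μ P * κ P ≤ a * d + b * c := by
  have hG0 : G ≠ 0 := hirr.ne_zero
  have hH0 : H ≠ 0 := fun h => hdvd (h ▸ dvd_zero _)
  obtain ⟨r, hr⟩ := V_large Z (fun P => μ P + κ P)
  have hN := hr (a + c + r) (b + d + r) (by omega) (by omega)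
  set N := V Z (fun P => μ P + κ P) (a + c + r) (b + d + r) with hNdef
  set M1 := mulS G (S (c + r) (d + r)) with hM1
  set M2 := mulS H (S (a + r) (b + r)) with hM2
  have f1 : finrank ℂ M1 = (c + r + 1) * (d + r + 1) := by
    rw [hM1, finrank_mulS G hG0, finrank_S]
  have f2 : finrank ℂ M2 = (a + r + 1) * (b + r + 1) := by
    rw [hM2, finrank_mulS H hH0, finrank_S]
  have hinf : M1 ⊓ M2 ≤ mulS (G * H) (S r r) := by
    rintro x ⟨hx1, hx2⟩
    obtain ⟨A, hA, rfl⟩ := mem_mulS.1 hx1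
    obtain ⟨B, hB, e⟩ := mem_mulS.1 hx2
    have hGB : G ∣ B := (hirr.prime.dvd_or_dvd (a := H) (b := B) ⟨A, e⟩).resolve_left hdvd
    obtain ⟨K, rfl⟩ := hGB
    refine mem_mulS.2 ⟨K, biform_quot hG0 hG hB, ?_⟩
    rw [← e]; ring
  have g1 := Submodule.finrank_mono hinf
  rw [finrank_mulS _ (mul_ne_zero hG0 hH0), finrank_S] at g1
  have g2 := Submodule.finrank_sup_add_finrank_inf_eq M1 M2
  have s1 := sup_step M1 N (mulS G (V Z κ (c + r) (d + r))) (∑ P ∈ Z, tri (κ P))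
    (Submodule.map_mono (V_le _ _ _ _)) (by
      intro x hx
      obtain ⟨A, hA, rfl⟩ := mem_mulS.1 hx
      rw [mem_V] at hA
      refine mem_V.2 ⟨?_, fun P hP => ?_⟩
      · have := biform_mul hG hA.1
        rwa [← add_assoc, ← add_assoc] at this
      · rw [pow_add]
        exact Ideal.mul_mem_mul (hGμ P hP) (hA.2 P hP)) (by
      rw [f1, finrank_mulS G hG0]
      exact V_ge _ _ _ _)
  have s2 := sup_step M2 (M1 ⊔ N) (mulS H (V Z μ (a + r) (b + r))) (∑ P ∈ Z, tri (μ P))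
    (Submodule.map_mono (V_le _ _ _ _)) (by
      refine le_trans ?_ le_sup_right
      intro x hx
      obtain ⟨A, hA, rfl⟩ := mem_mulS.1 hx
      rw [mem_V] at hA
      refine mem_V.2 ⟨?_, fun P hP => ?_⟩
      · have := biform_mul hH hA.1
        rwa [← add_assoc, ← add_assoc, add_comm c a, add_comm d b] at this
      · rw [add_comm, pow_add]
        exact Ideal.mul_mem_mul (hHκ P hP) (hA.2 P hP)) (by
      rw [f2, finrank_mulS H hH0]
      exact V_ge _ _ _ _)
  have s3 : finrank ℂ (M1 ⊔ M2 : Submodule ℂ R4) ≤ finrank ℂ (M2 ⊔ (M1 ⊔ N) : Submodule ℂ R4) :=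
    Submodule.finrank_mono (sup_le (le_sup_left.trans le_sup_right) le_sup_left)
  simp only [tri_add, Finset.sum_add_distrib] at hN
  have e1 : (a + c + r + 1) * (b + d + r + 1) + (r + 1) * (r + 1) =
    (c + r + 1) * (d + r + 1) + (a + r + 1) * (b + r + 1) + (a * d + b * c) := by ring
  omega

/-! ### Points on curves -/

lemma eval_smul_y {G : R4} {a b : ℕ} (hG : IsBiForm G a b) (x y : Fin 2 → ℂ) (l : ℂ) :
    eval (Sum.elim x (l • y)) G = l ^ b * eval (Sum.elim x y) G := by
  rw [eval_eq', eval_eq', Finset.mul_sum]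
  refine Finset.sum_congr rfl fun d hd => ?_
  have := hG (mem_support_iff.1 hd)
  rw [weight_bi, Prod.mk.injEq] at this
  simp only [Fintype.prod_sum_type, Fin.prod_univ_two, Sum.elim_inl, Sum.elim_inr, Pi.smul_apply,
    smul_eq_mul]
  rw [← this.2, pow_add]
  ring

lemma poly_eval (G : R4) (x : Fin 2 → ℂ) (y : Fin 2 → Polynomial ℂ) (t : ℂ) :
    (aeval (Sum.elim (fun i => Polynomial.C (x i)) y) G : Polynomial ℂ).eval t =
      eval (Sum.elim x (fun i => (y i).eval t)) G := by
  have : (Polynomial.aeval t).comp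
      (aeval (Sum.elim (fun i => Polynomial.C (x i)) y) : R4 →ₐ[ℂ] Polynomial ℂ) =
      aeval (Sum.elim x (fun i => (y i).eval t)) := by
    ext1 i
    rcases i with i | i <;> simp [Polynomial.coe_aeval_eq_eval]
  have h := congrArg (fun f => f G) this
  simpa [Polynomial.coe_aeval_eq_eval, coe_aeval_eq_eval] using h

lemma exists_root_y {G : R4} {a b : ℕ} (hG : IsBiForm G a b) (hb : 1 ≤ b) (x : Fin 2 → ℂ) :
    ∃ y : Fin 2 → ℂ, y ≠ 0 ∧ eval (Sum.elim x y) G = 0 := by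
  by_contra hcon
  push Not at hcon
  have hy : ∀ t : ℂ, (![t, 1] : Fin 2 → ℂ) ≠ 0 := fun t h => by simpa using congrFun h 1
  have hy' : ∀ t : ℂ, (![1, t] : Fin 2 → ℂ) ≠ 0 := fun t h => by simpa using congrFun h 0
  set g : Polynomial ℂ := aeval (Sum.elim (fun i => Polynomial.C (x i)) ![Polynomial.X, 1]) G with hg
  set k : Polynomial ℂ := aeval (Sum.elim (fun i => Polynomial.C (x i)) ![1, Polynomial.X]) G with hk
  have hge : ∀ t, g.eval t = eval (Sum.elim x ![t, 1]) G := by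
    intro t
    rw [hg, poly_eval]
    congr 2
    ext i; fin_cases i <;> simp
  have hke : ∀ t, k.eval t = eval (Sum.elim x ![1, t]) G := by
    intro t
    rw [hk, poly_eval]
    congr 2
    ext i; fin_cases i <;> simp
  have hdeg : g.degree = 0 := by
    by_contra hd
    obtain ⟨t, ht⟩ := IsAlgClosed.exists_root g hd
    exact hcon _ (hy t) (by rw [← hge]; exact ht)
  obtain ⟨c, hc⟩ : ∃ c, g = Polynomial.C c := ⟨_, Polynomial.eq_C_of_degree_eq_zero hdeg⟩
  have hkc : k = Polynomial.C c * Polynomial.X ^ b := by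
    refine Polynomial.eq_of_infinite_eval_eq _ _ (Set.Infinite.mono ?_
      (Set.Finite.infinite_compl (Set.finite_singleton (0 : ℂ))))
    intro s hs
    have hs0 : s ≠ 0 := hs
    have e1 : (![1, s] : Fin 2 → ℂ) = s • ![s⁻¹, 1] := by
      ext i; fin_cases i <;> simp [hs0]
    change k.eval s = _
    rw [hke, e1, eval_smul_y hG, ← hge, hc, Polynomial.eval_C, Polynomial.eval_mul, Polynomial.eval_C,
      Polynomial.eval_pow, Polynomial.eval_X, mul_comm]
  have h0 := hke 0
  rw [hkc] at h0
  have hb0 : b ≠ 0 := by omega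
  simp [hb0] at h0
  exact hcon _ (hy' 0) h0.symm

lemma exists_pt {G : R4} {a b : ℕ} (hG : IsBiForm G a b) (hb : 1 ≤ b) (ξ : ProjLine) :
    ∃ η : ProjLine, G ∈ pointIdeal (ξ, η) := by
  obtain ⟨y, hy, h⟩ := exists_root_y hG hb ξ.rep
  refine ⟨Projectivization.mk ℂ y hy, ?_⟩
  rw [mem_pt_iff _ hG]
  obtain ⟨u, hu⟩ := Projectivization.exists_smul_eq_mk_rep ℂ y hy
  unfold ev
  simp only
  rw [← hu]
  change eval (Sum.elim ξ.rep ((u : ℂ) • y)) G = 0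
  rw [eval_smul_y hG, h, mul_zero]

instance projLine_infinite : Infinite ProjLine := by
  have hy' : ∀ t : ℂ, (![1, t] : Fin 2 → ℂ) ≠ 0 := fun t h => by simpa using congrFun h 0
  refine Infinite.of_injective (fun t : ℂ => Projectivization.mk ℂ ![1, t] (hy' t)) ?_
  intro s t h
  obtain ⟨u, hu⟩ := (Projectivization.mk_eq_mk_iff' ℂ _ _ (hy' s) (hy' t)).1 h
  have h0 := congrFun hu 0
  have h1 := congrFun hu 1
  simp at h0 h1
  rw [h0] at h1
  simpa using h1.symm

lemma extra_pts {G : R4} {a b : ℕ} (hG : IsBiForm G a b) (hb : 1 ≤ b)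
    (Z : Finset (ProjLine × ProjLine)) (e : ℕ) :
    ∃ E : Finset (ProjLine × ProjLine), E.card = e ∧ (∀ P ∈ E, P ∉ Z) ∧ ∀ P ∈ E, G ∈ pointIdeal P := by
  classical
  choose η hη using fun ξ => exists_pt hG hb ξ
  have hinf : ((Z.image Prod.fst : Finset ProjLine) : Set ProjLine)ᶜ.Infinite :=
    Set.Finite.infinite_compl (Finset.finite_toSet _)
  obtain ⟨T, hT1, hT2⟩ := hinf.exists_subset_card_eq e
  refine ⟨T.image (fun ξ => (ξ, η ξ)), ?_, ?_, ?_⟩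
  · rw [Finset.card_image_of_injective _ (fun _ _ h => (Prod.mk.inj h).1), hT2]
  · intro P hP hZ
    obtain ⟨ξ, h1, rfl⟩ := Finset.mem_image.1 hP
    exact hT1 h1 (by
      rw [Finset.mem_coe]
      exact Finset.mem_image.2 ⟨_, hZ, rfl⟩)
  · intro P hP
    obtain ⟨ξ, h1, rfl⟩ := Finset.mem_image.1 hP
    exact hη ξ

/-! ### The genus bound -/

lemma genus_bound (Z : Finset (ProjLine × ProjLine)) (μ : ProjLine × ProjLine → ℕ) (G : R4)
    (a b : ℕ) (hG : IsBiForm G a b) (hb : 1 ≤ b) (hirr : Irreducible G)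
    (hGμ : ∀ P ∈ Z, G ∈ pointIdeal P ^ μ P) :
    ∑ P ∈ Z, tri (μ P - 1) + a + b ≤ a * b + 1 := by
  classical
  have hG0 : G ≠ 0 := hirr.ne_zero
  set δ := ∑ P ∈ Z, tri (μ P - 1) with hδ
  obtain ⟨e, he⟩ : ∃ e, e + δ + 1 = a * b + (a + b) * (δ + 1) := by
    refine ⟨a * b + (a + b) * (δ + 1) - (δ + 1), ?_⟩
    have : (δ + 1) ≤ (a + b) * (δ + 1) := Nat.le_mul_of_pos_left _ (by omega)
    omega
  obtain ⟨E, hE1, hE2, hE3⟩ := extra_pts hG hb Z e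
  have hdisj : Disjoint Z E := Finset.disjoint_right.2 hE2
  let μ' : ProjLine × ProjLine → ℕ := fun P => if P ∈ Z then μ P else 1
  let κ : ProjLine × ProjLine → ℕ := fun P => if P ∈ Z then μ P - 1 else 1
  have hsum : ∑ P ∈ Z ∪ E, tri (κ P) = δ + e := by
    rw [Finset.sum_union hdisj]
    congr 1
    · exact Finset.sum_congr rfl fun P hP => by simp [κ, hP]
    · rw [← hE1, Finset.card_eq_sum_ones]
      exact Finset.sum_congr rfl fun P hP => by simp [κ, hE2 P hP, tri_one]
  have hsum2 : ∑ P ∈ Z ∪ E, μ' P * κ P = 2 * δ + e := by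
    rw [Finset.sum_union hdisj]
    congr 1
    · rw [hδ, Finset.mul_sum]
      refine Finset.sum_congr rfl fun P hP => ?_
      simp only [μ', κ, hP, if_true]
      rw [two_tri]
      rcases μ P with _ | n
      · simp
      · simp [mul_comm]
    · rw [← hE1, Finset.card_eq_sum_ones]
      exact Finset.sum_congr rfl fun P hP => by simp [μ', κ, hE2 P hP]
  have hV := V_ge (Z ∪ E) κ (a + δ) (b + δ)
  rw [hsum] at hV
  have hnot : ¬ V (Z ∪ E) κ (a + δ) (b + δ) ≤ mulS G (S δ δ) := by
    intro hle
    have h1 := Submodule.finrank_mono hle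
    rw [finrank_mulS G hG0, finrank_S] at h1
    have h2 : (a + δ + 1) * (b + δ + 1) = a * b + (a + b) * (δ + 1) + (δ + 1) * (δ + 1) := by ring
    omega
  obtain ⟨H, hH, hHn⟩ := SetLike.not_le_iff_exists.1 hnot
  rw [mem_V] at hH
  have hdvd : ¬ G ∣ H := by
    rintro ⟨K, rfl⟩
    exact hHn (mem_mulS.2 ⟨K, biform_quot hG0 hG hH.1, rfl⟩)
  have hB := bezout (Z ∪ E) μ' κ G H a b (a + δ) (b + δ) hG hH.1 hirr hdvd (by
    intro P hP
    rcases Finset.mem_union.1 hP with h | h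
    · simpa [μ', h] using hGμ P h
    · simpa [μ', hE2 P h] using hE3 P h) hH.2
  rw [hsum2] at hB
  have : a * (b + δ) + b * (a + δ) + (a + b) = 2 * (a * b) + (a + b) * (δ + 1) := by ring
  omega

/-! ### Consequences -/

lemma exists_adjoint (Z : Finset (ProjLine × ProjLine)) (G : R4) (a b : ℕ) (hG : IsBiForm G a b)
    (ha : 1 ≤ a) (hb : 1 ≤ b) (hab : 3 ≤ a + b) (hirr : Irreducible G) :
    ∃ (K : R4) (c d : ℕ), K ≠ 0 ∧ c + d + 3 = a + b ∧ IsBiForm K c d ∧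
      ∀ P ∈ Z, ∀ (H : R4) (n : ℕ), G * H ∈ pointIdeal P ^ (n + 1) → K * H ∈ pointIdeal P ^ n := by
  choose μ hμ1 hμ2 using fun P => pt_order P G hirr.ne_zero
  have hgen := genus_bound Z μ G a b hG hb hirr (fun P _ => hμ1 P)
  have hK : ∃ (K : R4) (c d : ℕ), K ≠ 0 ∧ c + d + 3 = a + b ∧ IsBiForm K c d ∧
      ∀ P ∈ Z, K ∈ pointIdeal P ^ (μ P - 1) := by
    have main : ∀ c d, c + d + 3 = a + b → a * b + 1 < a + b + (c + 1) * (d + 1) →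
        ∃ (K : R4) (c d : ℕ), K ≠ 0 ∧ c + d + 3 = a + b ∧ IsBiForm K c d ∧
          ∀ P ∈ Z, K ∈ pointIdeal P ^ (μ P - 1) := by
      intro c d hcd hlt
      have hV := V_ge Z (fun P => μ P - 1) c d
      have hne : V Z (fun P => μ P - 1) c d ≠ ⊥ := by
        intro h
        rw [h, finrank_bot] at hV
        omega
      obtain ⟨K, hK, hK0⟩ := Submodule.exists_mem_ne_zero_of_ne_bot hne
      rw [mem_V] at hK
      exact ⟨K, c, d, hK0, hcd, hK.1, hK.2⟩
    by_cases h2 : 2 ≤ a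
    · obtain ⟨a', rfl⟩ := Nat.exists_eq_add_of_le h2
      obtain ⟨b', rfl⟩ := Nat.exists_eq_add_of_le hb
      exact main a' b' (by omega) (by nlinarith)
    · have : 2 ≤ b := by omega
      obtain ⟨b', rfl⟩ := Nat.exists_eq_add_of_le this
      obtain ⟨a', rfl⟩ := Nat.exists_eq_add_of_le ha
      exact main a' b' (by omega) (by nlinarith)
  obtain ⟨K, c, d, hK0, hcd, hKf, hKμ⟩ := hK
  refine ⟨K, c, d, hK0, hcd, hKf, fun P hP H n hn => ?_⟩
  by_cases hμ0 : μ P = 0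
  · have h1 := pt_cancel P G H (μ P) (n + 1) (hμ2 P) (by rw [hμ0, zero_add]; exact hn)
    exact Ideal.mul_mem_left _ _ (Ideal.pow_le_pow_right (Nat.le_succ n) h1)
  · by_cases hlt : μ P ≤ n + 1
    · have h1 := pt_cancel P G H (μ P) (n + 1 - μ P) (hμ2 P) (by
        rw [Nat.add_sub_cancel' hlt]; exact hn)
      have h2 := Ideal.mul_mem_mul (hKμ P hP) h1
      rw [← pow_add] at h2
      rwa [show μ P - 1 + (n + 1 - μ P) = n by omega] at h2
    · exact Ideal.mul_mem_right _ _ (Ideal.pow_le_pow_right (by omega) (hKμ P hP))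

lemma std_dvd (i : Fin 2 ⊕ Fin 2) (F : R4) (h : ∀ d, d i = 0 → coeff d F = 0) : X i ∣ F := by
  rw [X_dvd_iff_modMonomial_eq_zero]
  ext d
  by_cases hd : d i = 0
  · rw [coeff_modMonomial_of_not_le]
    · simpa using h d hd
    · intro hle
      have := hle i
      simp [hd] at this
  · rw [coeff_modMonomial_of_le]
    · simp
    · simpa [Nat.one_le_iff_ne_zero] using hd

lemma X_not_unit (i : Fin 2 ⊕ Fin 2) : ¬ IsUnit (X i : R4) := by
  intro h
  have := h.map (eval (0 : Fin 2 ⊕ Fin 2 → ℂ))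
  simp at this

lemma dvd_l (P : ProjLine × ProjLine) (G : R4) (a : ℕ) (hG : IsBiForm G a 0)
    (hGP : G ∈ pointIdeal P) (hirr : Irreducible G) :
    Associated (C (P.1.rep 1) * X (Sum.inl 0) - C (P.1.rep 0) * X (Sum.inl 1)) G := by
  obtain ⟨τ, h1, h2, -, h4, -⟩ := exists_tau P
  set l : R4 := C (P.1.rep 1) * X (Sum.inl 0) - C (P.1.rep 0) * X (Sum.inl 1)
  have hd : τ l ∣ τ G := by
    rw [h4]
    refine std_dvd _ _ fun d hd => ?_
    by_contra hne
    have h5 := biform_expo ((h2 _ _ _).1 hG) hne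
    rw [← pow_one (pointIdeal P), h1, mem_std_pow_iff_coeff] at hGP
    exact hne (hGP d (by omega))
  have hd' : l ∣ G := by
    have := map_dvd τ.symm hd
    simpa using this
  have hu : ¬ IsUnit l := by
    intro h
    have := h.map τ
    rw [h4] at this
    exact X_not_unit _ this
  exact (hirr.dvd_iff.1 hd').resolve_left hu |>.symm

lemma dvd_r (P : ProjLine × ProjLine) (G : R4) (b : ℕ) (hG : IsBiForm G 0 b)
    (hGP : G ∈ pointIdeal P) (hirr : Irreducible G) :
    Associated (C (P.2.rep 1) * X (Sum.inr 0) - C (P.2.rep 0) * X (Sum.inr 1)) G := by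
  obtain ⟨τ, h1, h2, -, -, h4⟩ := exists_tau P
  set l : R4 := C (P.2.rep 1) * X (Sum.inr 0) - C (P.2.rep 0) * X (Sum.inr 1)
  have hd : τ l ∣ τ G := by
    rw [h4]
    refine std_dvd _ _ fun d hd => ?_
    by_contra hne
    have h5 := biform_expo ((h2 _ _ _).1 hG) hne
    rw [← pow_one (pointIdeal P), h1, mem_std_pow_iff_coeff] at hGP
    exact hne (hGP d (by omega))
  have hd' : l ∣ G := by
    have := map_dvd τ.symm hd
    simpa using this
  have hu : ¬ IsUnit l := by
    intro h
    have := h.map τ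
    rw [h4] at this
    exact X_not_unit _ this
  exact (hirr.dvd_iff.1 hd').resolve_left hu |>.symm

lemma irr_y (G : R4) (b : ℕ) (hG : IsBiForm G 0 b) (hirr : Irreducible G) : b = 1 := by
  rcases Nat.eq_zero_or_pos b with rfl | hb
  · exfalso
    apply hirr.not_isUnit
    have : G = C (coeff 0 G) := by
      ext d
      rw [coeff_C]
      split_ifs with h
      · rw [h]
      · by_contra hne
        have h5 := biform_expo hG hne
        apply h
        rw [h5.2.2]
        ext i
        have h2 : ∀ i : Fin 2, i = 0 ∨ i = 1 := by decide
        rcases i with i | i <;> rcases h2 i with rfl | rfl <;> simp <;> omega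
    rw [this]
    refine IsUnit.map C (isUnit_iff_ne_zero.2 ?_)
    intro h
    rw [h, C_0] at this
    exact hirr.ne_zero this
  · obtain ⟨ξ⟩ : Nonempty ProjLine := inferInstance
    obtain ⟨η, h⟩ := exists_pt hG hb ξ
    obtain ⟨u, hu⟩ := dvd_r _ G b hG h hirr
    have h1 := hu ▸ hG
    have h0 : _ * (u : R4) ≠ 0 := hu ▸ hirr.ne_zero
    obtain ⟨k, hk⟩ := (MvPolynomial.isUnit_iff_eq_C_of_isReduced.1 u.isUnit)
    rw [hk.2] at hu
    have h3 : IsBiForm G 0 1 := by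
      rw [← hu, mul_comm]
      exact (biform_r _ _).C_mul _
    exact (biform_inj hirr.ne_zero hG h3).2

def swp : R4 ≃ₐ[ℂ] R4 := renameEquiv ℂ (Equiv.sumComm (Fin 2) (Fin 2))

lemma swp_biform {G : R4} {a b : ℕ} (hG : IsBiForm G a b) : IsBiForm (swp G) b a := by
  intro d hd
  have h1 : coeff d (rename (Equiv.sumComm (Fin 2) (Fin 2)) G) ≠ 0 := hd
  obtain ⟨e, rfl, he⟩ := coeff_rename_ne_zero _ _ _ h1
  have h2 := hG he
  rw [weight_bi, Prod.mk.injEq] at h2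
  rw [weight_bi, Prod.mk.injEq]
  have key : ∀ i, (Finsupp.mapDomain (Equiv.sumComm (Fin 2) (Fin 2)) e) i =
      e ((Equiv.sumComm (Fin 2) (Fin 2)).symm i) := by
    intro i
    rw [Finsupp.mapDomain_equiv_apply]
  simp only [key]
  exact ⟨h2.2, h2.1⟩

lemma irr_x (G : R4) (a : ℕ) (hG : IsBiForm G a 0) (hirr : Irreducible G) : a = 1 :=
  irr_y (swp G) a (swp_biform hG) ((MulEquiv.irreducible_iff swp.toMulEquiv).2 hirr)

lemma not_mem_sq (P : ProjLine × ProjLine) (G : R4) (a b : ℕ) (hG : IsBiForm G a b)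
    (hab : a + b = 1) (h0 : G ≠ 0) : G ∉ pointIdeal P ^ (1 + 1) := by
  obtain ⟨τ, h1, h2, -⟩ := exists_tau P
  rw [h1, mem_std_pow_iff_coeff]
  intro h
  apply h0
  apply τ.injective
  rw [map_zero]
  ext d
  by_contra hne
  have h5 := biform_expo ((h2 _ _ _).1 hG) hne
  exact hne (h d (by omega))

lemma cancel0 (P : ProjLine × ProjLine) (G H : R4) (n : ℕ) (h : G ∉ pointIdeal P)
    (h1 : G * H ∈ pointIdeal P ^ n) : H ∈ pointIdeal P ^ n :=
  pt_cancel P G H 0 n (by simpa using h) (by simpa using h1)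

lemma three_drop (P : ProjLine × ProjLine) (G₁ G₂ G₃ H : R4) (n : ℕ)
    (a1 : G₁ ∉ pointIdeal P ^ (1 + 1)) (a2 : G₂ ∉ pointIdeal P ^ (1 + 1))
    (a3 : G₃ ∉ pointIdeal P ^ (1 + 1))
    (h12 : ¬ (G₁ ∈ pointIdeal P ∧ G₂ ∈ pointIdeal P))
    (h13 : ¬ (G₁ ∈ pointIdeal P ∧ G₃ ∈ pointIdeal P))
    (h23 : ¬ (G₂ ∈ pointIdeal P ∧ G₃ ∈ pointIdeal P))
    (h : G₁ * (G₂ * (G₃ * H)) ∈ pointIdeal P ^ (n + 1)) : H ∈ pointIdeal P ^ n := by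
  by_cases c1 : G₁ ∈ pointIdeal P
  · have c2 : G₂ ∉ pointIdeal P := fun c2 => h12 ⟨c1, c2⟩
    have c3 : G₃ ∉ pointIdeal P := fun c3 => h13 ⟨c1, c3⟩
    rw [add_comm n 1] at h
    exact cancel0 P _ _ _ c3 (cancel0 P _ _ _ c2 (pt_cancel P _ _ 1 n a1 h))
  · have h' := cancel0 P _ _ _ c1 h
    by_cases c2 : G₂ ∈ pointIdeal P
    · have c3 : G₃ ∉ pointIdeal P := fun c3 => h23 ⟨c2, c3⟩
      rw [add_comm n 1] at h'
      exact cancel0 P _ _ _ c3 (pt_cancel P _ _ 1 n a2 h')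
    · have h'' := cancel0 P _ _ _ c2 h'
      rw [add_comm n 1] at h''
      exact pt_cancel P _ _ 1 n a3 h''

lemma mem_symb {Z : Finset (ProjLine × ProjLine)} {m : ℕ} {F : R4} :
    F ∈ symbPow Z m ↔ ∀ P ∈ Z, F ∈ pointIdeal P ^ m := by
  simp [symbPow]

lemma alpha_le {J : Ideal R4} {K : R4} {p q : ℕ} (h : K ∈ J) (h0 : K ≠ 0) (hK : IsBiForm K p q) :
    alphaPlus J ≤ p + q :=
  Nat.sInf_le ⟨p, q, rfl, K, h, h0, hK⟩

/-- Three pairwise coprime linear factors, no two through a common point, are too many. -/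
lemma three_factors (Z : Finset (ProjLine × ProjLine)) (m : ℕ)
    (h : alphaPlus (symbPow Z (m + 1)) = alphaPlus (symbPow Z m) + 2)
    (F : R4) (hFmem : F ∈ symbPow Z (m + 1)) (hF0 : F ≠ 0)
    (p q : ℕ) (hFform : IsBiForm F p q) (hdeg : p + q = alphaPlus (symbPow Z (m + 1)))
    (a b : ℕ) (hab : a + b = 1)
    (hass : ∀ (P : ProjLine × ProjLine) (G G' : R4), Irreducible G → Irreducible G' →
      IsBiForm G a b → IsBiForm G' a b → G ∈ pointIdeal P → G' ∈ pointIdeal P → Associated G G')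
    (G₁ G₂ G₃ : R4)
    (i1 : Irreducible G₁) (d1 : G₁ ∣ F) (f1 : IsBiForm G₁ a b)
    (i2 : Irreducible G₂) (d2 : G₂ ∣ F) (f2 : IsBiForm G₂ a b)
    (i3 : Irreducible G₃) (d3 : G₃ ∣ F) (f3 : IsBiForm G₃ a b) :
    Associated G₁ G₂ ∨ Associated G₁ G₃ ∨ Associated G₂ G₃ := by
  by_contra hcon
  push Not at hcon
  obtain ⟨n12, n13, n23⟩ := hcon
  obtain ⟨H1, rfl⟩ := d1
  have e2 := (i2.prime.dvd_or_dvd d2).resolve_left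
    (fun hd => n12 (i2.associated_of_dvd i1 hd).symm)
  obtain ⟨H2, rfl⟩ := e2
  have e3 := (i3.prime.dvd_or_dvd d3).resolve_left
    (fun hd => n13 (i3.associated_of_dvd i1 hd).symm)
  have e3' := (i3.prime.dvd_or_dvd e3).resolve_left
    (fun hd => n23 (i3.associated_of_dvd i2 hd).symm)
  obtain ⟨H, rfl⟩ := e3'
  have hHm : H ∈ symbPow Z m := by
    rw [mem_symb] at hFmem ⊢
    intro P hP
    refine three_drop P G₁ G₂ G₃ H m (not_mem_sq P _ a b f1 hab i1.ne_zero)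
      (not_mem_sq P _ a b f2 hab i2.ne_zero) (not_mem_sq P _ a b f3 hab i3.ne_zero) ?_ ?_ ?_
      (hFmem P hP)
    · exact fun hh => n12 (hass P _ _ i1 i2 f1 f2 hh.1 hh.2)
    · exact fun hh => n13 (hass P _ _ i1 i3 f1 f3 hh.1 hh.2)
    · exact fun hh => n23 (hass P _ _ i2 i3 f2 f3 hh.1 hh.2)
  obtain ⟨a1, b1, c1, r1, x1, y1, g1, k1⟩ := biform_factor _ _ _ _ hF0 hFform
  have hF1 := right_ne_zero_of_mul hF0
  obtain ⟨a2, b2, c2, r2, x2, y2, g2, k2⟩ := biform_factor _ _ _ _ hF1 k1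
  have hF2 := right_ne_zero_of_mul hF1
  obtain ⟨a3, b3, c3, r3, x3, y3, g3, k3⟩ := biform_factor _ _ _ _ hF2 k2
  have hF3 := right_ne_zero_of_mul hF2
  have z1 := biform_inj i1.ne_zero f1 g1
  have z2 := biform_inj i2.ne_zero f2 g2
  have z3 := biform_inj i3.ne_zero f3 g3
  have := alpha_le hHm hF3 k3
  omega

/-- Suppose `α⁺(I^{(m+1)}) = α⁺(I^{(m)}) + 2` for the radical ideal `I` of a finite set `Z`
of distinct points of `ℙ¹ × ℙ¹` and some `m ≥ 1`, and let `F ∈ I^{(m+1)}` be a nonzero form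
of bidegree `(p,q)` with `p + q = α⁺(I^{(m+1)})`.  Then every irreducible factor of `F` is a
form of bidegree `(1,0)`, `(0,1)` or `(1,1)`; moreover `F` has at most two distinct (i.e.
pairwise non-associated) irreducible factors of bidegree `(1,0)`, and at most two of
bidegree `(0,1)`. -/
theorem alphaPlus_jump_two_components (Z : Finset (ProjLine × ProjLine)) (m : ℕ) (hm : 1 ≤ m)
    (h : alphaPlus (symbPow Z (m + 1)) = alphaPlus (symbPow Z m) + 2)
    (F : R4) (hFmem : F ∈ symbPow Z (m + 1)) (hF0 : F ≠ 0)
    (p q : ℕ) (hFform : IsBiForm F p q) (hdeg : p + q = alphaPlus (symbPow Z (m + 1))) :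
    (∀ G : R4, Irreducible G → G ∣ F →
        IsBiForm G 1 0 ∨ IsBiForm G 0 1 ∨ IsBiForm G 1 1) ∧
    (∀ G₁ G₂ G₃ : R4,
        Irreducible G₁ → G₁ ∣ F → IsBiForm G₁ 1 0 →
        Irreducible G₂ → G₂ ∣ F → IsBiForm G₂ 1 0 →
        Irreducible G₃ → G₃ ∣ F → IsBiForm G₃ 1 0 →
        Associated G₁ G₂ ∨ Associated G₁ G₃ ∨ Associated G₂ G₃) ∧
    (∀ G₁ G₂ G₃ : R4,
        Irreducible G₁ → G₁ ∣ F → IsBiForm G₁ 0 1 →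
        Irreducible G₂ → G₂ ∣ F → IsBiForm G₂ 0 1 →
        Irreducible G₃ → G₃ ∣ F → IsBiForm G₃ 0 1 →
        Associated G₁ G₂ ∨ Associated G₁ G₃ ∨ Associated G₂ G₃) := by
  refine ⟨?_, ?_, ?_⟩
  · intro G hirr hdvd
    obtain ⟨H, rfl⟩ := hdvd
    obtain ⟨a, b, c, d, e1, e2, hG, hH⟩ := biform_factor _ _ _ _ hF0 hFform
    rcases Nat.eq_zero_or_pos a with rfl | ha
    · have := irr_y G b hG hirr
      subst this
      exact Or.inr (Or.inl hG)
    rcases Nat.eq_zero_or_pos b with rfl | hb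
    · have := irr_x G a hG hirr
      subst this
      exact Or.inl hG
    by_cases hab : 3 ≤ a + b
    · exfalso
      obtain ⟨K, c', d', hK0, hcd, hK, hdrop⟩ := exists_adjoint Z G a b hG ha hb hab hirr
      have hmem : K * H ∈ symbPow Z m := by
        rw [mem_symb] at hFmem ⊢
        exact fun P hP => hdrop P hP H m (hFmem P hP)
      have := alpha_le hmem (mul_ne_zero hK0 (right_ne_zero_of_mul hF0)) (biform_mul hK hH)
      omega
    · have h1 : a = 1 := by omega
      have h2 : b = 1 := by omega
      subst h1 h2
      exact Or.inr (Or.inr hG)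
  · intro G₁ G₂ G₃ i1 d1 f1 i2 d2 f2 i3 d3 f3
    exact three_factors Z m h F hFmem hF0 p q hFform hdeg 1 0 rfl
      (fun P G G' i i' f f' k k' => (dvd_l P G 1 f k i).symm.trans (dvd_l P G' 1 f' k' i'))
      G₁ G₂ G₃ i1 d1 f1 i2 d2 f2 i3 d3 f3
  · intro G₁ G₂ G₃ i1 d1 f1 i2 d2 f2 i3 d3 f3
    exact three_factors Z m h F hFmem hF0 p q hFform hdeg 0 1 rfl
      (fun P G G' i i' f f' k k' => (dvd_r P G 1 f k i).symm.trans (dvd_r P G' 1 f' k' i'))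
      G₁ G₂ G₃ i1 d1 f1 i2 d2 f2 i3 d3 f3
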